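/- arXiv:2605.04915 — 3 statements merged into one kernel-verified Lean document; each statement's English description precedes it below -/
import Mathlib

section
/- Fix σ° ∈ D lying in the interior of D relative to A_d. For σ ∈ D and an integer k ≥ 1 set σ^{(k)} := (1 − 1/k)·σ + (1/k)·σ°. Then there exist constants v₀ > 0 and r > 0, depending only on d, D, σ° and the normalization of Π but not on σ or k, such that for every σ ∈ D, every integer k ≥ 1, and every ε with 0 < ε ≤ r/k: Π({σ' ∈ D : ‖σ' − σ^{(k)}‖₁ ≤ ε}) ≥ v₀ · ε^{d²−1}. -/
/-!
Write `V` for the real space of traceless Hermitian matrices.  The restriction of `ν` to `V` is an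
additive Haar measure (`isAddHaarMeasure_comap`), so a ball of radius `c * ε` in `V` has mass
`(c * ε) ^ dim V` times that of the unit ball, and `dim V ≤ d ^ 2 - 1`
(`finrank_tracelessHerm_le`).  On the other hand, with `σₖ = (1 - 1/k) σ + (1/k) σ₀`,

  `σₖ + v = (1 - 1/k) σ + (1/k) (σ₀ + k v)`,

so by convexity `σₖ + v ∈ D` as soon as `v ∈ V` and the trace norm of `k v` is at most the radius
of a trace-norm ball around `σ₀` contained in `D`.  Since the trace norm is bounded by a multiple
of the entrywise sup norm (`traceNorm_le_of_entry_le`), the whole translate by `σₖ` of the sup-norm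
ball of radius `c * ε` in `V` lies in `D` and within trace distance `ε` of `σₖ`; its mass is
independent of `σₖ` by translation invariance.  This gives the bound uniformly in `σ` and `k`.
-/

/- STATEMENT 1: polynomial lower bound on the prior mass of small trace-norm
balls around the interior-shifted states σ^{(k)} = (1 − 1/k)σ + (1/k)σ₀.

Setup (following the CONTEXT): ν is a nonzero measure on the matrix space,
supported on the trace-zero Hermitian subspace V_d, invariant under translation
by elements of V_d, and finite on compact sets.  Vol is its translate by I/d
(Vol(A) = ν(A − I/d)) and Π = (Vol D)⁻¹ • Vol.restrict D.  D is a compact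
convex set of positive definite density matrices with nonempty interior
relative to the trace-one hyperplane A_d.  The hypothesis that σ₀ lies in the
interior of D relative to A_d is expressed directly: σ₀ ∈ D and some
trace-norm neighbourhood of σ₀ within A_d is contained in D. -/

open MeasureTheory Matrix
open scoped ComplexOrder ENNReal

noncomputable instance matrixMeasurableSpace {d : ℕ} :
    MeasurableSpace (Matrix (Fin d) (Fin d) ℂ) := borel _

instance matrixBorelSpace {d : ℕ} :
    BorelSpace (Matrix (Fin d) (Fin d) ℂ) := ⟨rfl⟩

/-- The trace norm of a complex `d × d` matrix: the sum of its singular values. -/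
noncomputable def traceNorm {d : ℕ} (A : Matrix (Fin d) (Fin d) ℂ) : ℝ :=
  ∑ i, Real.sqrt ((Matrix.posSemidef_conjTranspose_mul_self A).1.eigenvalues i)

/-! ### Traceless Hermitian matrices and the trace norm -/

/-- The real vector space of traceless Hermitian matrices. -/
def tracelessHerm (d : ℕ) : Submodule ℝ (Matrix (Fin d) (Fin d) ℂ) where
  carrier := {A | A.IsHermitian ∧ A.trace = 0}
  zero_mem' := by simp
  add_mem' := by
    rintro A B ⟨hA, hA'⟩ ⟨hB, hB'⟩
    exact ⟨hA.add hB, by simp [hA', hB']⟩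
  smul_mem' := by
    rintro c A ⟨hA, hA'⟩
    refine ⟨?_, by simp [hA']⟩
    simp [Matrix.IsHermitian, Matrix.conjTranspose_smul, hA.eq]

theorem isClosed_tracelessHerm (d : ℕ) :
    IsClosed (tracelessHerm d : Set (Matrix (Fin d) (Fin d) ℂ)) := by
  have h1 : IsClosed {A : Matrix (Fin d) (Fin d) ℂ | Aᴴ = A} :=
    isClosed_eq (by fun_prop) (by fun_prop)
  have h2 : IsClosed {A : Matrix (Fin d) (Fin d) ℂ | A.trace = 0} :=
    isClosed_eq (by fun_prop) (by fun_prop)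
  exact h1.inter h2

/-- Every singular value is at most the Frobenius norm, hence the crude constant `d * d`. -/
theorem traceNorm_le_of_entry_le {d : ℕ} (A : Matrix (Fin d) (Fin d) ℂ) {a : ℝ} (ha : 0 ≤ a)
    (h : ∀ i j, ‖A i j‖ ≤ a) : traceNorm A ≤ d * d * a := by
  have hps := Matrix.posSemidef_conjTranspose_mul_self A
  have htr : ∑ i, hps.1.eigenvalues i ≤ (d * a) ^ 2 := by
    have h1 := hps.1.trace_eq_sum_eigenvalues
    have h2 : (Aᴴ * A).trace = ((∑ i, ∑ j, ‖A j i‖ ^ 2 : ℝ) : ℂ) := by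
      simp only [Matrix.trace, Matrix.diag, Matrix.mul_apply, Matrix.conjTranspose_apply]
      push_cast
      refine Finset.sum_congr rfl fun i _ => Finset.sum_congr rfl fun j _ => ?_
      exact Complex.conj_mul' _
    rw [h2] at h1
    have h3 : ∑ i, hps.1.eigenvalues i = ∑ i, ∑ j, ‖A j i‖ ^ 2 := by
      apply Complex.ofReal_injective
      rw [h1]
      simp
    rw [h3]
    calc ∑ i, ∑ j, ‖A j i‖ ^ 2 ≤ ∑ _i : Fin d, ∑ _j : Fin d, a ^ 2 := by
          gcongr with i _ j _
          exact h j i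
      _ = (d * a) ^ 2 := by simp; ring
  have hev : ∀ i, Real.sqrt (hps.1.eigenvalues i) ≤ d * a := fun i =>
    Real.sqrt_le_iff.2 ⟨by positivity,
      (Finset.single_le_sum (fun j _ => hps.eigenvalues_nonneg j) (Finset.mem_univ i)).trans htr⟩
  calc traceNorm A ≤ ∑ _i : Fin d, d * a := Finset.sum_le_sum fun i _ => hev i
    _ = d * d * a := by simp; ring

/-- The map `((A, s), (B, t)) ↦ (A + s • 1) + i (B + t • 1)` from `(V × ℝ) × (V × ℝ)` to the
matrix space, where `V = tracelessHerm d`, is injective, so `2 (dim V + 1) ≤ 2 d ^ 2`. -/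
theorem finrank_tracelessHerm_le {d : ℕ} (hd : d ≠ 0) :
    Module.finrank ℝ (tracelessHerm d) ≤ d ^ 2 - 1 := by
  let g : (tracelessHerm d × ℝ) →ₗ[ℝ] Matrix (Fin d) (Fin d) ℂ :=
    (tracelessHerm d).subtype.coprod (LinearMap.toSpanSingleton ℝ _ 1)
  have hg : ∀ p, g p = (p.1 : Matrix (Fin d) (Fin d) ℂ) + p.2 • 1 := fun p => by simp [g]
  have hgH : ∀ p, (g p)ᴴ = g p := fun p => by
    rw [hg]
    simp [Matrix.conjTranspose_smul, p.1.2.1.eq]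
  have hg0 : ∀ p, g p = 0 → p = 0 := by
    intro p hp
    have h1 := congrArg Matrix.trace hp
    rw [hg] at h1 hp
    have h2 : p.2 = 0 := by simpa [p.1.2.2, hd] using h1
    rw [h2] at hp
    exact Prod.ext (Subtype.ext (by simpa using hp)) h2
  let f : ((tracelessHerm d × ℝ) × (tracelessHerm d × ℝ)) →ₗ[ℝ] Matrix (Fin d) (Fin d) ℂ :=
    g.coprod ((LinearMap.lsmul ℂ (Matrix (Fin d) (Fin d) ℂ) Complex.I).restrictScalars ℝ ∘ₗ g)
  have hf : ∀ p, f p = g p.1 + Complex.I • g p.2 := fun p => by simp [f]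
  have hinj : Function.Injective f := by
    rw [injective_iff_map_eq_zero]
    intro p hp
    rw [hf] at hp
    have h2 := congrArg Matrix.conjTranspose hp
    rw [Matrix.conjTranspose_add, Matrix.conjTranspose_smul, hgH, hgH] at h2
    have hc : star Complex.I = -Complex.I := Complex.conj_I
    rw [hc, neg_smul, Matrix.conjTranspose_zero] at h2
    have h3 : (2 : ℂ) • g p.1 = 0 := by
      rw [two_smul]
      calc g p.1 + g p.1 = (g p.1 + Complex.I • g p.2) + (g p.1 + -(Complex.I • g p.2)) := by abel
        _ = 0 := by rw [hp, h2, add_zero]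
    have h4 : g p.1 = 0 := by simpa using h3
    have h5 : g p.2 = 0 := by simpa [h4] using hp
    exact Prod.ext (hg0 _ h4) (hg0 _ h5)
  have h := LinearMap.finrank_le_finrank_of_injective hinj
  have hM : Module.finrank ℝ (Matrix (Fin d) (Fin d) ℂ) = 2 * d ^ 2 := by
    rw [Module.finrank_matrix]
    simp [Complex.finrank_real_complex]
    ring
  rw [hM] at h
  simp only [Module.finrank_prod, Module.finrank_self] at h
  omega

/-! ### The Haar measure on the traceless Hermitian matrices -/

/-- Invariance and local finiteness pass to the subspace directly; positivity on open sets follows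
because the restricted measure is regular and, by the support condition, nonzero. -/
theorem isAddHaarMeasure_comap {d : ℕ}
    (ν : Measure (Matrix (Fin d) (Fin d) ℂ))
    (hν0 : ν ≠ 0)
    (hνsupp : ν {A | ¬(A.IsHermitian ∧ A.trace = 0)} = 0)
    (hνinv : ∀ v : Matrix (Fin d) (Fin d) ℂ, v.IsHermitian → v.trace = 0 →
      ∀ s : Set (Matrix (Fin d) (Fin d) ℂ), MeasurableSet s →
        ν ((fun A => A + v) ⁻¹' s) = ν s)
    (hνfin : ∀ K : Set (Matrix (Fin d) (Fin d) ℂ), IsCompact K → ν K < ⊤) :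
    (ν.comap ((↑) : tracelessHerm d → Matrix (Fin d) (Fin d) ℂ)).IsAddHaarMeasure := by
  have : LocallyCompactSpace (Matrix (Fin d) (Fin d) ℂ) :=
    inferInstanceAs (LocallyCompactSpace (Fin d → Fin d → ℂ))
  have : SecondCountableTopology (Matrix (Fin d) (Fin d) ℂ) :=
    inferInstanceAs (SecondCountableTopology (Fin d → Fin d → ℂ))
  have : TopologicalSpace.PseudoMetrizableSpace (Matrix (Fin d) (Fin d) ℂ) :=
    inferInstanceAs (TopologicalSpace.PseudoMetrizableSpace (Fin d → Fin d → ℂ))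
  have : LocallyCompactSpace (tracelessHerm d) := (isClosed_tracelessHerm d).isClosedEmbedding_subtypeVal.locallyCompactSpace
  have hemb : MeasurableEmbedding ((↑) : tracelessHerm d → Matrix (Fin d) (Fin d) ℂ) :=
    MeasurableEmbedding.subtype_coe (isClosed_tracelessHerm d).measurableSet
  set μ := ν.comap ((↑) : tracelessHerm d → Matrix (Fin d) (Fin d) ℂ) with hμ
  have hfin : IsFiniteMeasureOnCompacts μ := ⟨fun K hK => by
    rw [hμ, hemb.comap_apply]
    exact hνfin _ (hK.image continuous_subtype_val)⟩
  have hinv : μ.IsAddLeftInvariant := by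
    refine ⟨fun v => Measure.ext fun s hs => ?_⟩
    rw [Measure.map_apply (measurable_const_add v) hs, hμ, hemb.comap_apply, hemb.comap_apply,
      ← hνinv v v.2.1 v.2.2 _ (hemb.measurableSet_image.2 hs)]
    congr 1
    ext A
    constructor
    · rintro ⟨B, hB, rfl⟩
      exact ⟨v + B, hB, by simp [add_comm]⟩
    · rintro ⟨B, hB, hBA⟩
      refine ⟨B - v, by simpa using hB, ?_⟩
      simp [hBA]
  have hne : μ ≠ 0 := by
    intro h0
    apply hν0
    have h1 : ν (tracelessHerm d : Set (Matrix (Fin d) (Fin d) ℂ)) = 0 := by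
      have := hemb.comap_apply ν Set.univ
      rw [← hμ, h0] at this
      simpa using this.symm
    rw [← Measure.measure_univ_eq_zero]
    refine measure_mono_null (t := (tracelessHerm d : Set (Matrix (Fin d) (Fin d) ℂ)) ∪
      {A | ¬(A.IsHermitian ∧ A.trace = 0)}) (fun A _ => ?_) (measure_union_null h1 hνsupp)
    exact em (A.IsHermitian ∧ A.trace = 0)
  have : TopologicalSpace.PseudoMetrizableSpace (tracelessHerm d) :=
    Topology.IsInducing.subtypeVal.pseudoMetrizableSpace
  have : NeZero μ := ⟨hne⟩
  have hopen : μ.IsOpenPosMeasure := isOpenPosMeasure_of_addLeftInvariant_of_regular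
  exact {}

open scoped Pointwise in
/-- `Measure.addHaar_smul` for a finite-dimensional space that carries only a topology, not a norm;
it is transported from `Fin n → ℝ`. -/
theorem addHaar_smul_of_topological {E : Type*} [AddCommGroup E] [Module ℝ E] [TopologicalSpace E]
    [IsTopologicalAddGroup E] [ContinuousSMul ℝ E] [T2Space E] [FiniteDimensional ℝ E]
    [MeasurableSpace E] [BorelSpace E] (μ : Measure E) [μ.IsAddHaarMeasure] {r : ℝ} (hr : 0 ≤ r)
    (s : Set E) :
    μ (r • s) = ENNReal.ofReal (r ^ Module.finrank ℝ E) * μ s := by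
  let e : E ≃L[ℝ] (Fin (Module.finrank ℝ E) → ℝ) :=
    ContinuousLinearEquiv.ofFinrankEq (by simp)
  have hHaar : (μ.map e).IsAddHaarMeasure :=
    e.toContinuousAddEquiv.isAddHaarMeasure_map μ
  have hmap : ∀ t : Set E, μ t = μ.map e (e '' t) := fun t => by
    have h := e.toHomeomorph.toMeasurableEquiv.map_apply (μ := μ) (e '' t)
    refine Eq.trans ?_ h.symm
    congr 1
    exact (Set.preimage_image_eq _ e.injective).symm
  rw [hmap, hmap s, image_smul_set, Measure.addHaar_smul, Module.finrank_fin_fun,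
    abs_of_nonneg (by positivity)]

/-! ### Sup-norm balls -/

/-- The traceless Hermitian matrices with entries of modulus at most `a`. -/
def supBall (d : ℕ) (a : ℝ) : Set (tracelessHerm d) :=
  {v | ∀ i j, ‖(v : Matrix (Fin d) (Fin d) ℂ) i j‖ ≤ a}

theorem isCompact_supBall (d : ℕ) (a : ℝ) : IsCompact (supBall d a) := by
  have h : IsCompact {A : Matrix (Fin d) (Fin d) ℂ | ∀ i j, ‖A i j‖ ≤ a} := by
    have := isCompact_univ_pi fun _ : Fin d => isCompact_univ_pi fun _ : Fin d =>
      isCompact_closedBall (0 : ℂ) a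
    have heq : {A : Matrix (Fin d) (Fin d) ℂ | ∀ i j, ‖A i j‖ ≤ a} =
        Set.pi Set.univ fun _ => Set.pi Set.univ fun _ => Metric.closedBall 0 a :=
      Set.ext fun A => ⟨fun h i _ j _ => by simpa using h i j,
        fun h i j => by simpa using h i trivial j trivial⟩
    rw [heq]
    exact this
  exact (isClosed_tracelessHerm d).isClosedEmbedding_subtypeVal.isCompact_preimage h

theorem supBall_mem_nhds (d : ℕ) {a : ℝ} (ha : 0 < a) : supBall d a ∈ nhds 0 := by
  refine (Filter.eventually_all.2 fun i => Filter.eventually_all.2 fun j => ?_)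
  have hc : Continuous fun v : tracelessHerm d => ‖(v : Matrix (Fin d) (Fin d) ℂ) i j‖ := by
    have := continuous_subtype_val (p := (· ∈ tracelessHerm d))
    exact (this.matrix_elem i j).norm
  exact (hc.tendsto 0).eventually_le_const (by simpa using ha)

open scoped Pointwise in
theorem supBall_eq_smul (d : ℕ) {a : ℝ} (ha : 0 < a) : supBall d a = a • supBall d 1 := by
  ext v
  rw [Set.mem_smul_set_iff_inv_smul_mem₀ ha.ne']
  simp [supBall, abs_of_pos ha, inv_mul_le_iff₀ ha]

/-! ### The mass of small balls around the shifted states -/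

theorem stmt1 {d : ℕ}
    (D : Set (Matrix (Fin d) (Fin d) ℂ))
    (hDcompact : IsCompact D) (hDconvex : Convex ℝ D)
    (hDstates : ∀ σ ∈ D, σ.PosDef ∧ σ.trace = 1)
    (σ₀ : Matrix (Fin d) (Fin d) ℂ) (hσ₀D : σ₀ ∈ D)
    (hσ₀int : ∃ r₀ > (0 : ℝ), ∀ τ : Matrix (Fin d) (Fin d) ℂ,
      τ.IsHermitian → τ.trace = 1 → traceNorm (τ - σ₀) ≤ r₀ → τ ∈ D)
    (ν : Measure (Matrix (Fin d) (Fin d) ℂ))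
    (hν0 : ν ≠ 0)
    (hνsupp : ν {A | ¬(A.IsHermitian ∧ A.trace = 0)} = 0)
    (hνinv : ∀ v : Matrix (Fin d) (Fin d) ℂ, v.IsHermitian → v.trace = 0 →
      ∀ s : Set (Matrix (Fin d) (Fin d) ℂ), MeasurableSet s →
        ν ((fun A => A + v) ⁻¹' s) = ν s)
    (hνfin : ∀ K : Set (Matrix (Fin d) (Fin d) ℂ), IsCompact K → ν K < ⊤)
    (Vol : Measure (Matrix (Fin d) (Fin d) ℂ))
    (hVol : Vol = ν.map (fun A => A + (d : ℂ)⁻¹ • (1 : Matrix (Fin d) (Fin d) ℂ)))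
    (prior : Measure (Matrix (Fin d) (Fin d) ℂ))
    (hprior : prior = (Vol D)⁻¹ • Vol.restrict D) :
    ∃ v₀ > (0 : ℝ), ∃ r > (0 : ℝ), ∀ σ ∈ D, ∀ k : ℕ, 1 ≤ k →
      ∀ ε : ℝ, 0 < ε → ε ≤ r / k →
        ENNReal.ofReal (v₀ * ε ^ (d ^ 2 - 1)) ≤
          prior {σ' | σ' ∈ D ∧
            traceNorm (σ' - ((1 - (k : ℝ)⁻¹) • σ + (k : ℝ)⁻¹ • σ₀)) ≤ ε} := by
  obtain ⟨r₀, hr₀, hball⟩ := hσ₀int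
  have hd : d ≠ 0 := by
    rintro rfl
    simpa [Matrix.trace] using (hDstates σ₀ hσ₀D).2
  have hdpos : (0 : ℝ) < d := by exact_mod_cast Nat.pos_of_ne_zero hd
  have hemb : MeasurableEmbedding ((↑) : tracelessHerm d → Matrix (Fin d) (Fin d) ℂ) :=
    MeasurableEmbedding.subtype_coe (isClosed_tracelessHerm d).measurableSet
  have hHaar := isAddHaarMeasure_comap ν hν0 hνsupp hνinv hνfin
  set μ := ν.comap ((↑) : tracelessHerm d → Matrix (Fin d) (Fin d) ℂ) with hμ
  set n := Module.finrank ℝ (tracelessHerm d) with hn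
  set J : Matrix (Fin d) (Fin d) ℂ := (d : ℂ)⁻¹ • 1 with hJ
  have hJH : J.IsHermitian := by simp [hJ, Matrix.IsHermitian, Matrix.conjTranspose_smul]
  have hJt : J.trace = 1 := by simp [hJ, hd]
  have hVolD : Vol D < ⊤ := by
    rw [hVol, Measure.map_apply (by fun_prop) hDcompact.measurableSet]
    exact hνfin _ ((Homeomorph.addRight J).isCompact_preimage.2 hDcompact)
  -- `c` is the reciprocal of the constant comparing the trace norm with the sup norm.
  set c : ℝ := (d * d : ℝ)⁻¹ with hc
  have hcpos : 0 < c := by positivity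
  have hcd : ∀ x : ℝ, (d : ℝ) * d * (c * x) = x := fun x => by rw [hc]; field_simp
  set B : Set (tracelessHerm d) := supBall d 1 with hB
  have hB0 : 0 < μ B := Measure.measure_pos_of_mem_nhds μ (supBall_mem_nhds d one_pos)
  have hBfin : μ B < ⊤ := (isCompact_supBall _ _).measure_lt_top
  -- `Vol D + 1` replaces `Vol D` so that the constant is finite without first showing `Vol D ≠ 0`.
  set w : ℝ≥0∞ := (Vol D + 1)⁻¹ * (ENNReal.ofReal (c ^ n) * μ B) with hw
  have hw0 : w ≠ 0 := by
    refine mul_ne_zero (ENNReal.inv_ne_zero.2 ?_) (mul_ne_zero ?_ hB0.ne')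
    · exact ENNReal.add_ne_top.2 ⟨hVolD.ne, ENNReal.one_ne_top⟩
    · exact (ENNReal.ofReal_pos.2 (by positivity)).ne'
  have hwtop : w ≠ ⊤ := by
    refine ENNReal.mul_ne_top (ENNReal.inv_ne_top.2 (by simp)) (ENNReal.mul_ne_top ?_ hBfin.ne)
    exact ENNReal.ofReal_ne_top
  refine ⟨w.toReal, ENNReal.toReal_pos hw0 hwtop, min r₀ 1, lt_min hr₀ one_pos, ?_⟩
  intro σ hσ k hk ε hε hεk
  have hk' : (1 : ℝ) ≤ k := by exact_mod_cast hk
  have hkpos : (0 : ℝ) < k := by linarith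
  have hkε : k * ε ≤ min r₀ 1 := by
    rw [le_div_iff₀ hkpos] at hεk
    linarith
  have hε1 : ε ≤ 1 := by nlinarith [min_le_right r₀ 1]
  set σk : Matrix (Fin d) (Fin d) ℂ := (1 - (k : ℝ)⁻¹) • σ + (k : ℝ)⁻¹ • σ₀ with hσk
  have hkinv : (k : ℝ)⁻¹ ≤ 1 := inv_le_one_of_one_le₀ hk'
  have hσkD : σk ∈ D := hDconvex hσ hσ₀D (by linarith) (by positivity) (by ring)
  set S : Set (tracelessHerm d) := supBall d (c * ε) with hS
  set T : Set (Matrix (Fin d) (Fin d) ℂ) := (fun v : tracelessHerm d => σk + v) '' S with hT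
  have hTc : IsCompact T := (isCompact_supBall _ _).image (by fun_prop)
  have hentry : ∀ v ∈ S, ∀ i j, ‖(v : Matrix (Fin d) (Fin d) ℂ) i j‖ ≤ c * ε := by
    exact fun v hv => hv
  have hTsub : T ⊆ {σ' | σ' ∈ D ∧ traceNorm (σ' - σk) ≤ ε} := by
    rintro _ ⟨v, hv, rfl⟩
    constructor
    · have hmem : σ₀ + (k : ℝ) • (v : Matrix (Fin d) (Fin d) ℂ) ∈ D := by
        have hkv := ((tracelessHerm d).smul_mem (k : ℝ) v.2)
        refine hball _ ((hDstates σ₀ hσ₀D).1.isHermitian.add hkv.1) ?_ ?_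
        · rw [Matrix.trace_add, hkv.2, (hDstates σ₀ hσ₀D).2, add_zero]
        · rw [add_sub_cancel_left]
          refine (traceNorm_le_of_entry_le (a := c * (k * ε)) _ (by positivity) ?_).trans ?_
          · intro i j
            rw [Matrix.smul_apply, norm_smul, Real.norm_of_nonneg hkpos.le]
            nlinarith [hentry v hv i j]
          · rw [hcd]
            exact hkε.trans (min_le_left _ _)
      have := hDconvex hσ hmem (a := 1 - (k : ℝ)⁻¹) (b := (k : ℝ)⁻¹) (by linarith)
        (by positivity) (by ring)
      rw [smul_add, smul_smul, inv_mul_cancel₀ hkpos.ne', one_smul, ← add_assoc] at this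
      exact this
    · rw [add_sub_cancel_left]
      exact (traceNorm_le_of_entry_le _ (by positivity) (hentry v hv)).trans (hcd ε).le
  have hVolT : Vol T = μ S := by
    have hv : σk - J ∈ tracelessHerm d :=
      ⟨(hDstates _ hσkD).1.isHermitian.sub hJH, by simp [(hDstates _ hσkD).2, hJt]⟩
    have hpre : MeasurableSet ((fun A => A + J) ⁻¹' T) :=
      hTc.measurableSet.preimage (by fun_prop)
    rw [hVol, Measure.map_apply (by fun_prop) hTc.measurableSet,
      ← hνinv _ hv.1 hv.2 _ hpre, hμ, hemb.comap_apply]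
    congr 1
    ext A
    simp only [Set.mem_preimage, hT, Set.mem_image, sub_add_cancel, add_assoc]
    refine exists_congr fun v => and_congr_right fun _ => ?_
    rw [add_comm A, add_right_inj]
  have hμS : μ S = ENNReal.ofReal ((c * ε) ^ n) * μ B := by
    rw [hS, supBall_eq_smul d (by positivity), addHaar_smul_of_topological μ (by positivity)]
  have hprT : prior T = (Vol D)⁻¹ * Vol T := by
    rw [hprior, Measure.smul_apply, Measure.restrict_apply hTc.measurableSet,
      Set.inter_eq_left.2 fun x hx => (hTsub hx).1, smul_eq_mul]
  calc ENNReal.ofReal (w.toReal * ε ^ (d ^ 2 - 1))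
      ≤ ENNReal.ofReal (w.toReal * ε ^ n) := by
        refine ENNReal.ofReal_le_ofReal (mul_le_mul_of_nonneg_left ?_ ENNReal.toReal_nonneg)
        exact pow_le_pow_of_le_one hε.le hε1 (finrank_tracelessHerm_le hd)
    _ = (Vol D + 1)⁻¹ * (ENNReal.ofReal ((c * ε) ^ n) * μ B) := by
        rw [ENNReal.ofReal_mul ENNReal.toReal_nonneg, ENNReal.ofReal_toReal hwtop, hw, mul_pow,
          ENNReal.ofReal_mul (by positivity)]
        ring
    _ ≤ (Vol D)⁻¹ * (ENNReal.ofReal ((c * ε) ^ n) * μ B) := by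
        gcongr
        exact le_self_add
    _ = prior T := by rw [hprT, hVolT, hμS]
    _ ≤ _ := measure_mono hTsub
end

section
/- Let ρ be a full-rank density matrix on ℂ^d, let X be a finite set with |X| ≥ 2, and let D be a nonempty compact set (in trace norm) of full-rank density matrices on ℂ^d with ρ ∉ D. Then there exists η > 0 such that for every σ ∈ D and every POVM m* on X attaining the supremum sup_{M ∈ POVMs on X} D(P_{σ,M} ‖ P_{ρ,M}), one has D(P_{ρ,m*} ‖ P_{σ,m*}) ≥ η. -/
/-!
The two divergences of one measurement are comparable as long as the likelihood ratio is bounded.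
With `p = P_{σ,M}` and `q = P_{ρ,M}`, each summand satisfies
`(√p - √q)² ≤ q log (q / p) - q + p` and, when `p ≤ C q`,
`p log (p / q) - p + q ≤ (p - q)² / q ≤ (1 + √C)² (√p - √q)²`.
Hence `D(p‖q) ≤ (1 + √C)² D(q‖p)`. Since `σ ≤ 1 ≤ C ρ` in the Loewner order, for a constant `C`
depending on `ρ` alone, the comparison is uniform in the state `σ` and the POVM (`klDivFin_le`).

It remains to bound `sup_M D(P_{σ,M}‖P_{ρ,M})` below by a positive constant on the compact set.
For each `σ ≠ ρ`, the effect `E = (1 + σ - ρ) / 2` and its complement form a two-outcome POVM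
whose outcome probabilities under `σ` and `ρ` differ by `tr (σ - ρ)² / 2 > 0`
(`exists_povm_klDivFin_pos`). For a fixed POVM the divergence is continuous in `σ`, so a finite
cover of the compact set gives a uniform lower bound (`exists_uniform_povm`).
-/


/- STATEMENT 8: ∃ η > 0 such that for every σ ∈ D and every POVM m* attaining
sup_M D(P_{σ,M} ‖ P_{ρ,M}), one has D(P_{ρ,m*} ‖ P_{σ,m*}) ≥ η.
As all states involved are full rank, the KL divergence is the real-valued sum
∑ p(x)·log(p(x)/q(x)) (convention 0·log 0 = 0, valid since `Real.log 0 = 0`).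
Compactness in trace norm coincides with compactness for the standard topology
on matrices (all norms on a finite-dimensional space are equivalent). -/

open Matrix
open scoped ComplexOrder

/-- A POVM on the finite outcome set `X`. -/
def IsPOVM {d : ℕ} {X : Type*} [Fintype X] (M : X → Matrix (Fin d) (Fin d) ℂ) : Prop :=
  (∀ x, (M x).PosSemidef) ∧ ∑ x, M x = 1

/-- The outcome distribution induced by a state `τ` and a POVM `M`. -/
noncomputable def probOf {d : ℕ} {X : Type*} [Fintype X]
    (τ : Matrix (Fin d) (Fin d) ℂ) (M : X → Matrix (Fin d) (Fin d) ℂ) : X → ℝ :=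
  fun x => (M x * τ).trace.re

/-- Kullback–Leibler divergence between distributions on a finite set. -/
noncomputable def klDivFin {X : Type*} [Fintype X] (p q : X → ℝ) : ℝ :=
  ∑ x, p x * Real.log (p x / q x)

/-! ### Divergences of vectors of nonnegative numbers -/

lemma sq_sqrt_sub_le {p q : ℝ} (hp : 0 ≤ p) (hq : 0 ≤ q) (hpq : p = 0 ↔ q = 0) :
    (√p - √q) ^ 2 ≤ p * Real.log (p / q) - p + q := by
  rcases hp.eq_or_lt with h | hp'
  · obtain rfl := h.symm
    obtain rfl := hpq.1 rfl
    simp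
  have hq' : 0 < q := lt_of_le_of_ne hq fun h => hp'.ne' (hpq.2 h.symm)
  obtain ⟨a, ha, rfl⟩ : ∃ a, 0 < a ∧ p = a ^ 2 := ⟨√p, Real.sqrt_pos.2 hp', (Real.sq_sqrt hp).symm⟩
  obtain ⟨b, hb, rfl⟩ : ∃ b, 0 < b ∧ q = b ^ 2 := ⟨√q, Real.sqrt_pos.2 hq', (Real.sq_sqrt hq).symm⟩
  rw [Real.sqrt_sq ha.le, Real.sqrt_sq hb.le, ← div_pow, Real.log_pow]
  have h := Real.one_sub_inv_le_log_of_pos (div_pos ha hb)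
  rw [inv_div] at h
  have h2 : a ^ 2 * (1 - b / a) ≤ a ^ 2 * Real.log (a / b) := by gcongr
  have h3 : a ^ 2 * (1 - b / a) = a ^ 2 - a * b := by field_simp
  push_cast
  nlinarith

/-- The `χ²` bound on a summand of the divergence, rewritten in terms of square roots. -/
lemma mul_log_le_sq_sqrt_sub {p q C : ℝ} (hp : 0 ≤ p) (hq : 0 ≤ q) (hC : 0 ≤ C) (h : p ≤ C * q) :
    p * Real.log (p / q) - p + q ≤ (1 + √C) ^ 2 * (√p - √q) ^ 2 := by
  rcases hq.eq_or_lt with h0 | hq'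
  · obtain rfl := h0.symm
    obtain rfl : p = 0 := le_antisymm (by simpa using h) hp
    simp
  rcases hp.eq_or_lt with h0 | hp'
  · obtain rfl := h0.symm
    have : 1 ≤ (1 + √C) ^ 2 := one_le_pow₀ (by linarith [Real.sqrt_nonneg C])
    simp only [zero_mul, Real.sqrt_zero, zero_sub, neg_sq, Real.sq_sqrt hq]
    nlinarith
  have hab : √p ≤ √C * √q := by rw [← Real.sqrt_mul hC]; exact Real.sqrt_le_sqrt h
  obtain ⟨a, ha, rfl⟩ : ∃ a, 0 < a ∧ p = a ^ 2 := ⟨√p, Real.sqrt_pos.2 hp', (Real.sq_sqrt hp).symm⟩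
  obtain ⟨b, hb, rfl⟩ : ∃ b, 0 < b ∧ q = b ^ 2 := ⟨√q, Real.sqrt_pos.2 hq', (Real.sq_sqrt hq).symm⟩
  rw [Real.sqrt_sq ha.le, Real.sqrt_sq hb.le] at *
  have hlog := Real.log_le_sub_one_of_pos (div_pos hp' hq')
  have h1 : a ^ 2 * Real.log (a ^ 2 / b ^ 2) ≤ a ^ 2 * (a ^ 2 / b ^ 2 - 1) := by gcongr
  have h2 : a ^ 2 * (a ^ 2 / b ^ 2 - 1) - a ^ 2 + b ^ 2 = ((a + b) / b) ^ 2 * (a - b) ^ 2 := by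
    field_simp
    ring
  have h3 : (a + b) / b ≤ 1 + √C := by
    rw [div_le_iff₀ hb]
    linarith
  calc _ ≤ ((a + b) / b) ^ 2 * (a - b) ^ 2 := by linarith
    _ ≤ _ := by gcongr

lemma klDivFin_eq {X : Type*} [Fintype X] {p q : X → ℝ} (hs : ∑ x, p x = ∑ x, q x) :
    klDivFin p q = ∑ x, (p x * Real.log (p x / q x) - p x + q x) := by
  rw [Finset.sum_add_distrib, Finset.sum_sub_distrib, klDivFin, hs]
  ring

lemma klDivFin_le {X : Type*} [Fintype X] {p q : X → ℝ} {C : ℝ} (hs : ∑ x, p x = ∑ x, q x)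
    (hp : ∀ x, 0 ≤ p x) (hq : ∀ x, 0 ≤ q x) (hpq : ∀ x, p x = 0 ↔ q x = 0) (hC : 0 ≤ C)
    (h : ∀ x, p x ≤ C * q x) :
    klDivFin p q ≤ (1 + √C) ^ 2 * klDivFin q p := by
  rw [klDivFin_eq hs, klDivFin_eq hs.symm, Finset.mul_sum]
  refine Finset.sum_le_sum fun x _ => (mul_log_le_sq_sqrt_sub (hp x) (hq x) hC (h x)).trans ?_
  have := sq_sqrt_sub_le (hq x) (hp x) (hpq x).symm
  rw [show (√(p x) - √(q x)) ^ 2 = (√(q x) - √(p x)) ^ 2 by ring]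
  gcongr

lemma klDivFin_pos {X : Type*} [Fintype X] {p q : X → ℝ} (hs : ∑ x, p x = ∑ x, q x)
    (hp : ∀ x, 0 ≤ p x) (hq : ∀ x, 0 ≤ q x) (hpq : ∀ x, p x = 0 ↔ q x = 0) {a : X}
    (ha : p a ≠ q a) : 0 < klDivFin p q := by
  rw [klDivFin_eq hs]
  have key x := sq_sqrt_sub_le (hp x) (hq x) (hpq x)
  refine Finset.sum_pos' (fun x _ => (sq_nonneg _).trans (key x)) ⟨a, Finset.mem_univ _, ?_⟩
  refine lt_of_lt_of_le ?_ (key a)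
  have : √(p a) - √(q a) ≠ 0 := fun h =>
    ha ((Real.sqrt_inj (hp a) (hq a)).1 (sub_eq_zero.1 h))
  positivity

/-! ### Loewner order and outcome probabilities -/

lemma posSemidef_affine {d : ℕ} {A : Matrix (Fin d) (Fin d) ℂ} (hA : A.IsHermitian) (a b : ℝ)
    (h : ∀ i, 0 ≤ a + b * hA.eigenvalues i) :
    ((a : ℂ) • (1 : Matrix (Fin d) (Fin d) ℂ) + (b : ℂ) • A).PosSemidef := by
  have hd : (a : ℂ) • (1 : Matrix (Fin d) (Fin d) ℂ) + (b : ℂ) • A =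
      (hA.eigenvectorUnitary : Matrix (Fin d) (Fin d) ℂ) *
        diagonal (fun i => ((a + b * hA.eigenvalues i : ℝ) : ℂ)) *
        (hA.eigenvectorUnitary : Matrix (Fin d) (Fin d) ℂ)ᴴ := by
    have h1 : diagonal (fun i => ((a + b * hA.eigenvalues i : ℝ) : ℂ)) =
        (a : ℂ) • (1 : Matrix (Fin d) (Fin d) ℂ) +
          (b : ℂ) • diagonal (RCLike.ofReal ∘ hA.eigenvalues) := by
      ext i j
      by_cases hij : i = j
      · subst hij; simp
      · simp [hij]
    have hU : (hA.eigenvectorUnitary : Matrix (Fin d) (Fin d) ℂ) *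
        (hA.eigenvectorUnitary : Matrix (Fin d) (Fin d) ℂ)ᴴ = 1 :=
      Unitary.coe_mul_star_self _
    conv_lhs => rw [hA.spectral_theorem, Unitary.conjStarAlgAut_apply]
    rw [h1, mul_add, add_mul, Matrix.mul_smul, Matrix.smul_mul, Matrix.mul_smul, Matrix.smul_mul,
      Matrix.mul_one, hU]
    rfl
  rw [hd]
  refine (PosSemidef.diagonal fun i => ?_).mul_mul_conjTranspose_same _
  simpa using Complex.zero_le_real.2 (h i)

lemma one_sub_posSemidef {d : ℕ} {A : Matrix (Fin d) (Fin d) ℂ} (hA : A.PosSemidef)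
    (htr : A.trace = 1) : (1 - A).PosSemidef := by
  have hs : ∑ i, hA.1.eigenvalues i = 1 := by
    have := congrArg Complex.re hA.1.trace_eq_sum_eigenvalues
    rw [htr] at this
    simpa using this.symm
  have := posSemidef_affine hA.1 1 (-1) fun i => by
    have := Finset.single_le_sum (fun j _ => hA.eigenvalues_nonneg j) (Finset.mem_univ i)
    linarith
  simpa [sub_eq_add_neg] using this

lemma exists_smul_sub_one_posSemidef {d : ℕ} {A : Matrix (Fin d) (Fin d) ℂ} (hA : A.PosDef) :
    ∃ C : ℝ, 0 ≤ C ∧ ((C : ℂ) • A - 1).PosSemidef := by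
  -- `∑ i, 1 / λ i` dominates `1 / λ_min`.
  have hn : ∀ i ∈ Finset.univ, 0 ≤ (hA.1.eigenvalues i)⁻¹ := fun i _ =>
    (inv_pos.2 (hA.eigenvalues_pos i)).le
  refine ⟨∑ i, (hA.1.eigenvalues i)⁻¹, Finset.sum_nonneg hn, ?_⟩
  have := posSemidef_affine hA.1 (-1) (∑ i, (hA.1.eigenvalues i)⁻¹) fun i => by
    have h1 := Finset.single_le_sum hn (Finset.mem_univ i)
    have h2 := mul_le_mul_of_nonneg_right h1 (hA.eigenvalues_pos i).le
    rw [inv_mul_cancel₀ (hA.eigenvalues_pos i).ne'] at h2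
    linarith
  rw [sub_eq_add_neg, add_comm]
  simpa using this

lemma trace_mul_re_nonneg {d : ℕ} {A B : Matrix (Fin d) (Fin d) ℂ} (hA : A.PosSemidef)
    (hB : B.PosSemidef) : 0 ≤ (A * B).trace.re := by
  open scoped MatrixOrder in
  obtain ⟨S, rfl⟩ := CStarAlgebra.nonneg_iff_eq_star_mul_self.mp hA.nonneg
  rw [Matrix.star_eq_conjTranspose, Matrix.trace_mul_cycle, Matrix.trace_mul_cycle]
  exact (Complex.le_def.1 (hB.mul_mul_conjTranspose_same S).trace_nonneg).1

section probOf

variable {d : ℕ} {X : Type*} [Fintype X] {σ ρ : Matrix (Fin d) (Fin d) ℂ}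
  {M : X → Matrix (Fin d) (Fin d) ℂ}

lemma probOf_nonneg (hM : IsPOVM M) (hσ : σ.PosSemidef) (x : X) : 0 ≤ probOf σ M x :=
  trace_mul_re_nonneg (hM.1 x) hσ

lemma sum_probOf (hM : IsPOVM M) (hσ : σ.trace = 1) : ∑ x, probOf σ M x = 1 := by
  simp only [probOf]
  rw [← Complex.re_sum, ← Matrix.trace_sum, ← Finset.sum_mul, hM.2, one_mul, hσ, Complex.one_re]

lemma probOf_le (hM : IsPOVM M) (hσ : σ.PosSemidef) (hσtr : σ.trace = 1) {C : ℝ}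
    (hC : ((C : ℂ) • ρ - 1).PosSemidef) (x : X) : probOf σ M x ≤ C * probOf ρ M x := by
  have h := trace_mul_re_nonneg (hM.1 x) (hC.add (one_sub_posSemidef hσ hσtr))
  rw [sub_add_sub_cancel, Matrix.mul_sub, Matrix.trace_sub, Matrix.mul_smul, Matrix.trace_smul,
    Complex.sub_re, smul_eq_mul, Complex.re_ofReal_mul] at h
  simp only [probOf]
  linarith

lemma probOf_eq_zero_of (hM : IsPOVM M) (hσ : σ.PosSemidef) (hσtr : σ.trace = 1)
    (hρ : ρ.PosDef) {x : X} (h : probOf ρ M x = 0) : probOf σ M x = 0 := by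
  obtain ⟨C, -, hC⟩ := exists_smul_sub_one_posSemidef hρ
  refine le_antisymm ?_ (probOf_nonneg hM hσ x)
  simpa [h] using probOf_le hM hσ hσtr hC x

/-- Continuity holds at every matrix `σ`, states or not: if `probOf ρ M x = 0`, the corresponding
summand is identically `0` because `Real.log (_ / 0) = 0`. -/
lemma continuous_klDivFin_probOf (ρ : Matrix (Fin d) (Fin d) ℂ)
    (M : X → Matrix (Fin d) (Fin d) ℂ) :
    Continuous fun σ => klDivFin (probOf σ M) (probOf ρ M) := by
  unfold klDivFin
  refine continuous_finsetSum _ fun x _ => ?_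
  have hc : Continuous fun σ => probOf σ M x := by
    unfold probOf
    fun_prop
  rcases eq_or_ne (probOf ρ M x) 0 with h | h
  · simp [h, continuous_const]
  · have h1 : (fun σ => probOf σ M x * Real.log (probOf σ M x / probOf ρ M x)) = fun σ =>
        probOf ρ M x * ((probOf σ M x / probOf ρ M x) *
          Real.log (probOf σ M x / probOf ρ M x)) := by
      funext σ
      field_simp
    rw [h1]
    exact continuous_const.mul (Real.continuous_mul_log.comp (hc.div_const _))

/-! ### A uniform lower bound for the supremum -/

lemma exists_povm_klDivFin_pos (hX : 2 ≤ Fintype.card X) (hρ : ρ.PosDef) (hρtr : ρ.trace = 1)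
    (hσ : σ.PosDef) (hσtr : σ.trace = 1) (hne : σ ≠ ρ) :
    ∃ M : X → Matrix (Fin d) (Fin d) ℂ,
      IsPOVM M ∧ 0 < klDivFin (probOf σ M) (probOf ρ M) := by
  classical
  obtain ⟨a, b, hab⟩ := Fintype.exists_pair_of_one_lt_card hX
  set E : Matrix (Fin d) (Fin d) ℂ := (1 / 2 : ℂ) • ((1 - ρ) + σ) with hE
  have h2 : (0 : ℂ) ≤ 1 / 2 := by
    rw [show (1 / 2 : ℂ) = ((1 / 2 : ℝ) : ℂ) by push_cast; rfl]
    exact Complex.zero_le_real.2 (by norm_num)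
  have hE0 : E.PosSemidef :=
    ((one_sub_posSemidef hρ.posSemidef hρtr).add hσ.posSemidef).smul h2
  have hE1 : (1 - E).PosSemidef := by
    have : 1 - E = (1 / 2 : ℂ) • ((1 - σ) + ρ) := by
      rw [hE]
      module
    rw [this]
    exact ((one_sub_posSemidef hσ.posSemidef hσtr).add hρ.posSemidef).smul h2
  let M : X → Matrix (Fin d) (Fin d) ℂ := Pi.single a E + Pi.single b (1 - E)
  have hM : IsPOVM M := by
    refine ⟨fun x => ?_, ?_⟩
    · refine PosSemidef.add ?_ ?_
      · rcases eq_or_ne x a with rfl | h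
        · simpa using hE0
        · simpa [h] using PosSemidef.zero
      · rcases eq_or_ne x b with rfl | h
        · simpa using hE1
        · simpa [h] using PosSemidef.zero
    · simp [M, Finset.sum_add_distrib]
  refine ⟨M, hM, klDivFin_pos (a := a) ?_ (probOf_nonneg hM hσ.posSemidef)
    (probOf_nonneg hM hρ.posSemidef) (fun x => ⟨probOf_eq_zero_of hM hρ.posSemidef hρtr hσ,
      probOf_eq_zero_of hM hσ.posSemidef hσtr hρ⟩) ?_⟩
  · rw [sum_probOf hM hσtr, sum_probOf hM hρtr]
  · have hMa : M a = E := by simp [M, hab]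
    intro heq
    set H := σ - ρ with hH
    have hherm : Hᴴ = H := (hσ.1.sub hρ.1)
    have h0 : (E * H).trace.re = 0 := by
      rw [hH, Matrix.mul_sub, Matrix.trace_sub, Complex.sub_re, sub_eq_zero, ← hMa]
      exact heq
    have hEH : E = (1 / 2 : ℂ) • (1 + H) := by
      rw [hE, hH]
      module
    -- `tr H = 0`, so `tr (E H) = tr (H²) / 2`.
    have hHt : H.trace = 0 := by rw [hH, Matrix.trace_sub, hσtr, hρtr, sub_self]
    rw [hEH, Matrix.smul_mul, Matrix.trace_smul, add_mul, one_mul, Matrix.trace_add, hHt, zero_add,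
      smul_eq_mul, show (1 / 2 : ℂ) = ((1 / 2 : ℝ) : ℂ) by push_cast; rfl,
      Complex.re_ofReal_mul] at h0
    have hnn := (posSemidef_conjTranspose_mul_self H).trace_nonneg
    have hz : (Hᴴ * H).trace = 0 := by
      refine Complex.ext ?_ (Complex.le_def.1 hnn).2.symm
      rw [hherm, Complex.zero_re]
      linarith
    exact hne (sub_eq_zero.1 (Matrix.trace_conjTranspose_mul_self_eq_zero_iff.1 hz))

lemma exists_uniform_povm (hX : 2 ≤ Fintype.card X) (hρ : ρ.PosDef) (hρtr : ρ.trace = 1)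
    {D : Set (Matrix (Fin d) (Fin d) ℂ)} (hD : IsCompact D)
    (hDstates : ∀ σ ∈ D, σ.PosDef ∧ σ.trace = 1) (hρD : ρ ∉ D) :
    ∃ ε > (0 : ℝ), ∀ σ ∈ D, ∃ M : X → Matrix (Fin d) (Fin d) ℂ,
      IsPOVM M ∧ ε ≤ klDivFin (probOf σ M) (probOf ρ M) := by
  refine hD.induction_on (p := fun s => ∃ ε > (0 : ℝ), ∀ σ ∈ s,
    ∃ M : X → Matrix (Fin d) (Fin d) ℂ, IsPOVM M ∧ ε ≤ klDivFin (probOf σ M) (probOf ρ M))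
    ⟨1, one_pos, by simp⟩ ?_ ?_ ?_
  · rintro s t hst ⟨ε, hε, h⟩
    exact ⟨ε, hε, fun σ hσ => h σ (hst hσ)⟩
  · rintro s t ⟨ε₁, hε₁, h₁⟩ ⟨ε₂, hε₂, h₂⟩
    refine ⟨min ε₁ ε₂, lt_min hε₁ hε₂, ?_⟩
    rintro σ (hσ | hσ)
    · obtain ⟨M, hM, h⟩ := h₁ σ hσ
      exact ⟨M, hM, (min_le_left _ _).trans h⟩
    · obtain ⟨M, hM, h⟩ := h₂ σ hσ
      exact ⟨M, hM, (min_le_right _ _).trans h⟩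
  · intro σ hσ
    obtain ⟨M, hM, h⟩ := exists_povm_klDivFin_pos hX hρ hρtr (hDstates σ hσ).1
      (hDstates σ hσ).2 (fun h => hρD (h ▸ hσ))
    refine ⟨_, mem_nhdsWithin_of_mem_nhds
      ((continuous_klDivFin_probOf ρ M).continuousAt.eventually (lt_mem_nhds (half_lt_self h))),
      _, half_pos h, fun τ hτ => ⟨M, hM, le_of_lt hτ⟩⟩

end probOf

theorem stmt8 {d : ℕ} {X : Type*} [Fintype X] (hX : 2 ≤ Fintype.card X)
    (ρ : Matrix (Fin d) (Fin d) ℂ) (hρ : ρ.PosDef) (hρtr : ρ.trace = 1)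
    (D : Set (Matrix (Fin d) (Fin d) ℂ)) (hDne : D.Nonempty) (hDcompact : IsCompact D)
    (hDstates : ∀ σ ∈ D, σ.PosDef ∧ σ.trace = 1) (hρD : ρ ∉ D) :
    ∃ η > (0 : ℝ), ∀ σ ∈ D, ∀ mstar : X → Matrix (Fin d) (Fin d) ℂ, IsPOVM mstar →
      (∀ M : X → Matrix (Fin d) (Fin d) ℂ, IsPOVM M →
        klDivFin (probOf σ M) (probOf ρ M) ≤ klDivFin (probOf σ mstar) (probOf ρ mstar)) →
      η ≤ klDivFin (probOf ρ mstar) (probOf σ mstar) := by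
  obtain ⟨ε, hε, hunif⟩ := exists_uniform_povm hX hρ hρtr hDcompact hDstates hρD
  obtain ⟨C, hC0, hC⟩ := exists_smul_sub_one_posSemidef hρ
  have hK : 0 < (1 + √C) ^ 2 := by positivity
  refine ⟨ε / (1 + √C) ^ 2, div_pos hε hK, fun σ hσ m hm hmax => ?_⟩
  obtain ⟨hσp, hσtr⟩ := hDstates σ hσ
  obtain ⟨M, hM, hle⟩ := hunif σ hσ
  rw [div_le_iff₀' hK]
  refine (hle.trans (hmax M hM)).trans (klDivFin_le ?_ (probOf_nonneg hm hσp.posSemidef)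
    (probOf_nonneg hm hρ.posSemidef) (fun x => ⟨probOf_eq_zero_of hm hρ.posSemidef hρtr hσp,
      probOf_eq_zero_of hm hσp.posSemidef hσtr hρ⟩) hC0 (probOf_le hm hσp.posSemidef hσtr hC))
  rw [sum_probOf hm hσtr, sum_probOf hm hρtr]
end

section
/- Let σ and σ' be Hermitian positive semidefinite d×d complex matrices and let δ > 0 be such that σ' ⪰ δ·I. Then σ ⪯ (1 + ‖σ − σ'‖₁/δ)·σ'. -/
/-!
Put `A = σ - σ'` and `T = ‖A‖₁`. Every eigenvalue of the Hermitian matrix `A` is at most its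
absolute value, which is a singular value of `A` and hence one of the nonnegative terms summing
to `T`; therefore `A ⪯ T • I` (`posSemidef_traceNorm_smul_one_sub`). Since `I ⪯ δ⁻¹ • σ'`, this
gives `σ = σ' + A ⪯ σ' + (T / δ) • σ'`.
-/

/- STATEMENT 10: If σ, σ' are PSD and σ' ⪰ δ·I with δ > 0, then
σ ⪯ (1 + ‖σ − σ'‖₁/δ)·σ'.  `A ⪯ B` is stated as `(B - A).PosSemidef`. -/

open Matrix
open scoped ComplexOrder

lemma traceNorm_nonneg {d : ℕ} (A : Matrix (Fin d) (Fin d) ℂ) : 0 ≤ traceNorm A :=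
  Finset.sum_nonneg fun _ _ => Real.sqrt_nonneg _

/-- For Hermitian `A` the square of an eigenvalue is an eigenvalue of `Aᴴ * A = A ^ 2`, so its
absolute value is one of the singular values. -/
lemma le_traceNorm_of_mem_spectrum {d : ℕ} {A : Matrix (Fin d) (Fin d) ℂ} (hA : A.IsHermitian)
    {x : ℝ} (hx : x ∈ spectrum ℝ A) : x ≤ traceNorm A := by
  have hsq : x ^ 2 ∈ spectrum ℝ (Aᴴ * A) := by
    rw [hA.eq, ← pow_two]
    exact spectrum.pow_mem_pow A 2 hx
  rw [(posSemidef_conjTranspose_mul_self A).1.spectrum_real_eq_range_eigenvalues] at hsq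
  obtain ⟨i, hi⟩ := hsq
  calc x ≤ |x| := le_abs_self x
    _ = Real.sqrt ((posSemidef_conjTranspose_mul_self A).1.eigenvalues i) := by
      rw [hi, Real.sqrt_sq_eq_abs]
    _ ≤ traceNorm A :=
      Finset.single_le_sum
        (f := fun i => Real.sqrt ((posSemidef_conjTranspose_mul_self A).1.eigenvalues i))
        (fun _ _ => Real.sqrt_nonneg _) (Finset.mem_univ i)

lemma posSemidef_traceNorm_smul_one_sub {d : ℕ} {A : Matrix (Fin d) (Fin d) ℂ}
    (hA : A.IsHermitian) :
    (((traceNorm A : ℝ) : ℂ) • (1 : Matrix (Fin d) (Fin d) ℂ) - A).PosSemidef := by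
  have hT : ((traceNorm A : ℝ) : ℂ) • (1 : Matrix (Fin d) (Fin d) ℂ)
      = algebraMap ℝ (Matrix (Fin d) (Fin d) ℂ) (traceNorm A) := by
    rw [Algebra.algebraMap_eq_smul_one, Complex.coe_smul]
  have hH : (((traceNorm A : ℝ) : ℂ) • (1 : Matrix (Fin d) (Fin d) ℂ) - A).IsHermitian := by
    refine IsHermitian.sub ?_ hA
    simp [IsHermitian, conjTranspose_smul]
  rw [hH.posSemidef_iff_eigenvalues_nonneg]
  intro i
  have hi := hH.eigenvalues_mem_spectrum_real i
  generalize hH.eigenvalues i = y at hi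
  rw [hT, ← spectrum.singleton_sub_eq] at hi
  obtain ⟨_, rfl, x, hx, rfl⟩ := hi
  exact sub_nonneg.2 (le_traceNorm_of_mem_spectrum hA hx)

theorem stmt10 {d : ℕ} (σ σ' : Matrix (Fin d) (Fin d) ℂ) (δ : ℝ)
    (hσ : σ.PosSemidef) (hσ' : σ'.PosSemidef) (hδ : 0 < δ)
    (h : (σ' - (δ : ℂ) • (1 : Matrix (Fin d) (Fin d) ℂ)).PosSemidef) :
    (((1 + traceNorm (σ - σ') / δ : ℝ) : ℂ) • σ' - σ).PosSemidef := by
  have hA := posSemidef_traceNorm_smul_one_sub (hσ.1.sub hσ'.1)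
  have hc : (0 : ℂ) ≤ ((traceNorm (σ - σ') / δ : ℝ) : ℂ) :=
    Complex.zero_le_real.2 (div_nonneg (traceNorm_nonneg _) hδ.le)
  have hsum := (h.smul hc).add hA
  generalize traceNorm (σ - σ') = T at *
  convert hsum using 1
  have hδ' : (δ : ℂ) ≠ 0 := by exact_mod_cast hδ.ne'
  have hcancel : ((T / δ : ℝ) : ℂ) * (δ : ℂ) = (T : ℂ) := by
    push_cast
    exact div_mul_cancel₀ _ hδ'
  rw [smul_sub, smul_smul, hcancel, Complex.ofReal_add, add_smul, Complex.ofReal_one, one_smul]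
  abel
end
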